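/- Let 𝔞 be a cofinite monomial ideal in k[x₁,…,x_d]. Then for every real number c > 0 one has m(c+1) ≥ m(c); in particular, if c is a jumping number of 𝔞 then so is c+1. (Monomial case of Proposition 3.5.) -/

import Mathlib

open Set Filter Pointwise MeasureTheory

/-- The map sending a vector of natural number exponents to the corresponding
real vector. -/
noncomputable def expToReal (d : ℕ) (v : Fin d → ℕ) : Fin d → ℝ := fun i => (v i : ℝ)

/-- The Newton polyhedron of a monomial ideal with exponent set `S`:
the convex hull in `ℝ^d` of the exponent vectors. -/
noncomputable def newtonPoly (d : ℕ) (S : Set (Fin d → ℕ)) : Set (Fin d → ℝ) :=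
  convexHull ℝ (expToReal d '' S)

/-- The multiplicity `m(c)` of `c > 0` as a (candidate) jumping number of the monomial
ideal with exponent set `S`: the number of `v ∈ ℕ^d` with `v + 𝟏` on the boundary part
`c•P(𝔞) \ int(c•P(𝔞))` of the dilated Newton polyhedron. -/
noncomputable def multJump (d : ℕ) (S : Set (Fin d → ℕ)) (c : ℝ) : ℕ :=
  Nat.card {v : Fin d → ℕ |
    expToReal d v + 1 ∈ c • newtonPoly d S \ interior (c • newtonPoly d S)}

/-- Non-interior points of a convex set with nonempty interior are exactly those at which some
nonzero continuous linear functional bounds the set. -/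
theorem Convex.notMem_interior_iff_exists_support {E : Type*} [NormedAddCommGroup E]
    [NormedSpace ℝ E] {A : Set E} (hA : Convex ℝ A) (hne : (interior A).Nonempty) {u : E} :
    u ∉ interior A ↔ ∃ f : E →L[ℝ] ℝ, f ≠ 0 ∧ ∀ x ∈ A, f x ≤ f u := by
  constructor
  · intro hu
    obtain ⟨f, hf⟩ := geometric_hahn_banach_open_point hA.interior isOpen_interior hu
    refine ⟨f, ?_, fun x hx => ?_⟩
    · rintro rfl
      obtain ⟨a, ha⟩ := hne
      simpa using hf a ha
    · have hx' : x ∈ closure (interior A) := by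
        rw [hA.closure_interior_eq_closure_of_nonempty_interior hne]
        exact subset_closure hx
      exact closure_minimal (fun a ha => (hf a ha).le)
        (isClosed_le f.continuous continuous_const) hx'
  · rintro ⟨f, hf0, hf⟩ hu
    have hmax : IsLocalMax f u :=
      Filter.mem_of_superset (mem_interior_iff_mem_nhds.mp hu) hf
    exact hf0 (hmax.hasFDerivAt_eq_zero f.hasFDerivAt)

/-- A linear functional maximised over a convex hull at a point of it attains this maximum at a
generator. -/
theorem exists_eq_of_mem_convexHull_of_forall_le {E : Type*} [NormedAddCommGroup E]
    [NormedSpace ℝ E] {T : Set E} (f : E →L[ℝ] ℝ) {p : E} (hp : p ∈ convexHull ℝ T)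
    (hf : ∀ x ∈ convexHull ℝ T, f x ≤ f p) : ∃ s ∈ T, f s = f p := by
  by_contra! h
  have hsub : convexHull ℝ T ⊆ {x | f x < f p} :=
    convexHull_min (fun s hs => lt_of_le_of_ne (hf s (subset_convexHull ℝ T hs)) (h s hs))
      (convex_halfSpace_lt f.isLinear (f p))
  exact lt_irrefl (f p) (hsub hp)

theorem Convex.add_mem_add_one_smul {E : Type*} [AddCommGroup E] [Module ℝ E] {P : Set E}
    (hP : Convex ℝ P) {c : ℝ} (hc : 0 ≤ c) {u s : E} (hu : u ∈ c • P) (hs : s ∈ P) :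
    u + s ∈ (c + 1) • P := by
  rw [hP.add_smul hc zero_le_one, one_smul]
  exact Set.add_mem_add hu hs

theorem Set.nonempty_interior_smul {E : Type*} [NormedAddCommGroup E] [NormedSpace ℝ E]
    {P : Set E} (hne : (interior P).Nonempty) {c : ℝ} (hc : 0 < c) :
    (interior (c • P)).Nonempty := by
  rw [interior_smul₀ hc.ne']
  exact hne.smul_set

/-- A boundary point of `c • convexHull T` can be translated by a generator to a boundary point
of `(c + 1) • convexHull T`. -/
theorem exists_add_notMem_interior_add_one_smul {E : Type*} [NormedAddCommGroup E]
    [NormedSpace ℝ E] {T : Set E} (hne : (interior (convexHull ℝ T)).Nonempty) {c : ℝ}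
    (hc : 0 < c) {u : E} (hu : u ∈ c • convexHull ℝ T)
    (hu' : u ∉ interior (c • convexHull ℝ T)) :
    ∃ s ∈ T, u + s ∉ interior ((c + 1) • convexHull ℝ T) := by
  have hP : Convex ℝ (convexHull ℝ T) := convex_convexHull ℝ T
  rw [(hP.smul c).notMem_interior_iff_exists_support (nonempty_interior_smul hne hc)] at hu'
  obtain ⟨f, hf0, hf⟩ := hu'
  obtain ⟨p, hp, rfl⟩ := hu
  have hmax : ∀ x ∈ convexHull ℝ T, f x ≤ f p := fun x hx => by
    have h := hf _ (smul_mem_smul_set hx)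
    simp only [map_smul, smul_eq_mul] at h
    exact le_of_mul_le_mul_left h hc
  obtain ⟨s, hs, hsp⟩ := exists_eq_of_mem_convexHull_of_forall_le f hp hmax
  refine ⟨s, hs, ?_⟩
  rw [(hP.smul (c + 1)).notMem_interior_iff_exists_support
    (nonempty_interior_smul hne (by linarith))]
  refine ⟨f, hf0, ?_⟩
  rintro _ ⟨q, hq, rfl⟩
  simp only [map_smul, map_add, smul_eq_mul, hsp]
  nlinarith [hmax q hq]

/-- If a boundary point of `(c + 1) • P` decomposes as `u + s = u' + s'` with `u, u' ∈ c • P` and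
`s, s' ∈ P`, then `u + s'` is a boundary point as well. -/
theorem Convex.add_notMem_interior_of_add_eq_add {E : Type*} [NormedAddCommGroup E]
    [NormedSpace ℝ E] {P : Set E} (hP : Convex ℝ P) (hne : (interior P).Nonempty) {c : ℝ}
    (hc : 0 ≤ c) {u u' s s' : E} (hu' : u' ∈ c • P) (hs : s ∈ P)
    (heq : u + s = u' + s') (h : u + s ∉ interior ((c + 1) • P)) :
    u + s' ∉ interior ((c + 1) • P) := by
  have hiff := fun w => (hP.smul (c + 1)).notMem_interior_iff_exists_support (u := w)
    (nonempty_interior_smul hne (by linarith))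
  rw [hiff] at h ⊢
  obtain ⟨f, hf0, hf⟩ := h
  refine ⟨f, hf0, fun x hx => (hf x hx).trans ?_⟩
  have h₁ := hf _ (hP.add_mem_add_one_smul hc hu' hs)
  have h₂ := congrArg f heq
  simp only [map_add] at h₁ h₂ ⊢
  linarith

theorem expToReal_add (d : ℕ) (v w : Fin d → ℕ) :
    expToReal d (v + w) = expToReal d v + expToReal d w := by
  ext i
  simp [expToReal]

/-- Far along each coordinate axis, every real point lies in the Newton polyhedron. -/
theorem exists_forall_single_mem_newtonPoly {d : ℕ} {S : Set (Fin d → ℕ)}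
    (hcof : (Sᶜ : Set (Fin d → ℕ)).Finite) :
    ∃ N : ℕ, ∀ (i : Fin d) (t : ℝ), (N : ℝ) ≤ t → Pi.single i t ∈ newtonPoly d S := by
  obtain ⟨b, hb⟩ := hcof.bddAbove
  have hmem : ∀ (i : Fin d) (n : ℕ), ∑ j, b j + 1 ≤ n →
      (Pi.single i (n : ℝ) : Fin d → ℝ) ∈ newtonPoly d S := by
    intro i n hn
    refine subset_convexHull ℝ _ ⟨Pi.single i n, ?_, ?_⟩
    · by_contra h
      have h₁ : n ≤ b i := by simpa using hb h i
      have h₂ : b i ≤ ∑ j, b j :=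
        Finset.single_le_sum (fun _ _ => Nat.zero_le _) (Finset.mem_univ i)
      omega
    · ext j
      rcases eq_or_ne j i with rfl | hj <;> simp [expToReal, *]
  refine ⟨∑ j, b j + 1, fun i t ht => ?_⟩
  have hle : ∑ j, b j + 1 ≤ ⌈t⌉₊ := by exact_mod_cast ht.trans (Nat.le_ceil t)
  have hconv : Convex ℝ ((LinearMap.single ℝ (fun _ : Fin d => ℝ) i) ⁻¹' newtonPoly d S) :=
    (convex_convexHull ℝ _).linear_preimage _
  exact hconv.ordConnected.out (hmem i _ le_rfl) (hmem i _ hle) ⟨ht, Nat.le_ceil t⟩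

/-- The Newton polyhedron of a cofinite monomial ideal contains in its interior the part of the open
positive orthant beyond some simplex. -/
theorem exists_subset_interior_newtonPoly {d : ℕ} {S : Set (Fin d → ℕ)}
    (hcof : (Sᶜ : Set (Fin d → ℕ)).Finite) :
    ∃ N : ℕ, {x : Fin d → ℝ | (∀ i, 0 < x i) ∧ (N : ℝ) < ∑ i, x i} ⊆
      interior (newtonPoly d S) := by
  obtain ⟨N, hN⟩ := exists_forall_single_mem_newtonPoly hcof
  refine ⟨N, interior_maximal ?_ ?_⟩
  · rintro x ⟨hx, hsum⟩
    have hpos : 0 < ∑ i, x i := (Nat.cast_nonneg N).trans_lt hsum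
    have key : ∑ i, (x i / ∑ j, x j) • (Pi.single i (∑ j, x j) : Fin d → ℝ) ∈ newtonPoly d S :=
      (convex_convexHull ℝ _).sum_mem (fun i _ => (div_pos (hx i) hpos).le)
        (by rw [← Finset.sum_div, div_self hpos.ne']) (fun i _ => hN i _ hsum.le)
    convert key
    ext k
    simp [Finset.sum_apply, Pi.single_apply, hpos.ne']
  · have hopen : IsOpen {x : Fin d → ℝ | ∀ i, 0 < x i} := by
      simp only [ofPred_forall]
      exact isOpen_iInter_of_finite fun i => isOpen_lt continuous_const (continuous_apply i)
    exact hopen.inter (isOpen_lt continuous_const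
      (continuous_finsetSum _ fun i _ => continuous_apply i))

theorem nonempty_interior_newtonPoly {d : ℕ} (hd : 1 ≤ d) {S : Set (Fin d → ℕ)}
    (hcof : (Sᶜ : Set (Fin d → ℕ)).Finite) : (interior (newtonPoly d S)).Nonempty := by
  obtain ⟨N, hN⟩ := exists_subset_interior_newtonPoly hcof
  refine ⟨fun _ => (N : ℝ) + 1, hN ⟨fun _ => by positivity, ?_⟩⟩
  have hd' : (1 : ℝ) ≤ d := by exact_mod_cast hd
  simp only [Finset.sum_const, Finset.card_univ, Fintype.card_fin, nsmul_eq_mul]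
  nlinarith [Nat.cast_nonneg (α := ℝ) N]

/-- Only finitely many shifted exponents lie outside the interior of a dilated Newton
polyhedron. -/
theorem finite_notMem_interior_smul_newtonPoly {d : ℕ} {S : Set (Fin d → ℕ)}
    (hcof : (Sᶜ : Set (Fin d → ℕ)).Finite) {c : ℝ} (hc : 0 < c) :
    {v : Fin d → ℕ | expToReal d v + 1 ∉ interior (c • newtonPoly d S)}.Finite := by
  obtain ⟨N, hN⟩ := exists_subset_interior_newtonPoly hcof
  refine (Set.finite_Iic (fun _ : Fin d => ⌈c * N⌉₊)).subset fun v hv i => ?_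
  by_contra! hlt
  refine hv ?_
  rw [interior_smul₀ hc.ne', mem_smul_set_iff_inv_smul_mem₀ hc.ne']
  have hpos : ∀ j, 0 < (c⁻¹ • (expToReal d v + 1)) j := fun j => by
    simp only [Pi.smul_apply, Pi.add_apply, expToReal, Pi.one_apply, smul_eq_mul]
    positivity
  refine hN ⟨hpos, lt_of_lt_of_le ?_
    (Finset.single_le_sum (fun j _ => (hpos j).le) (Finset.mem_univ i))⟩
  have hv' : c * N < v i := (Nat.le_ceil _).trans_lt (by exact_mod_cast hlt)
  simp only [Pi.smul_apply, Pi.add_apply, expToReal, Pi.one_apply, smul_eq_mul]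
  rw [lt_inv_mul_iff₀ hc]
  linarith

/-- Monomial case of Proposition 3.5: for a cofinite monomial ideal, `m(c+1) ≥ m(c)` for
every `c > 0`; in particular if `c` is a jumping number then so is `c+1`. -/
theorem multiplicity_monotone_under_integer_shift (d : ℕ) (hd : 1 ≤ d) (k : Type*) [Field k]
    (S : Set (Fin d → ℕ)) (hS : ∀ v ∈ S, ∀ w : Fin d → ℕ, v + w ∈ S)
    (hcof : (Sᶜ : Set (Fin d → ℕ)).Finite)
    (c : ℝ) (hc : 0 < c) :
    multJump d S c ≤ multJump d S (c + 1) ∧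
      (0 < multJump d S c → 0 < multJump d S (c + 1)) := by
  set P := newtonPoly d S
  have hP : Convex ℝ P := convex_convexHull ℝ _
  have hne : (interior P).Nonempty := nonempty_interior_newtonPoly hd hcof
  have hfin : {v : Fin d → ℕ |
      expToReal d v + 1 ∈ (c + 1) • P \ interior ((c + 1) • P)}.Finite :=
    (finite_notMem_interior_smul_newtonPoly hcof (by linarith)).subset fun v hv => hv.2
  have hSP : ∀ s ∈ S, expToReal d s ∈ P := fun s hs =>
    subset_convexHull ℝ _ (mem_image_of_mem _ hs)
  -- translate each exponent by the first `s ∈ S` (in a fixed enumeration) landing on the boundary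
  let good (v s : Fin d → ℕ) : Prop :=
    s ∈ S ∧ expToReal d v + 1 + expToReal d s ∉ interior ((c + 1) • P)
  have hfirst : ∀ v, expToReal d v + 1 ∈ c • P \ interior (c • P) →
      ∃ s, good v s ∧ ∀ t, good v t → Encodable.encode s ≤ Encodable.encode t := by
    rintro v ⟨hv, hv'⟩
    obtain ⟨_, ⟨s, hs, rfl⟩, hvs⟩ := exists_add_notMem_interior_add_one_smul hne hc hv hv'
    have hset : {s | good v s}.Nonempty := ⟨s, hs, hvs⟩
    exact ⟨Function.argminOn Encodable.encode _ hset, Function.argminOn_mem _ _ hset,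
      fun t ht => Function.argminOn_le Encodable.encode {s | good v s} ht⟩
  choose! φ hφ hmin using hfirst
  have hle : multJump d S c ≤ multJump d S (c + 1) := by
    refine Set.ncard_le_ncard_of_injOn (fun v => v + φ v) (fun v hv => ?_)
      (fun v hv w hw hvw => ?_) hfin
    · have heq : expToReal d (v + φ v) + 1 = expToReal d v + 1 + expToReal d (φ v) := by
        rw [expToReal_add]; abel
      simp only [mem_ofPred_eq, heq]
      exact ⟨hP.add_mem_add_one_smul hc.le hv.1 (hSP _ (hφ v hv).1), (hφ v hv).2⟩
    · have heq : expToReal d v + 1 + expToReal d (φ v) =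
          expToReal d w + 1 + expToReal d (φ w) := by
        have h := congrArg (expToReal d) hvw
        simp only [expToReal_add] at h
        rw [add_right_comm, h, add_right_comm]
      have hvw' : good v (φ w) := ⟨(hφ w hw).1, hP.add_notMem_interior_of_add_eq_add hne hc.le
        hw.1 (hSP _ (hφ v hv).1) heq (hφ v hv).2⟩
      have hwv' : good w (φ v) := ⟨(hφ v hv).1, hP.add_notMem_interior_of_add_eq_add hne hc.le
        hv.1 (hSP _ (hφ w hw).1) heq.symm (hφ w hw).2⟩
      have hφeq : φ v = φ w := Encodable.encode_injective
        (le_antisymm (hmin v hv _ hvw') (hmin w hw _ hwv'))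
      simpa [hφeq] using hvw
  exact ⟨hle, fun h => h.trans_le hle⟩
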